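/- Let n ≥ 1, let B be the Minkowski bilinear form on ℝ^{1+n}, B(x,y) = x₀y₀ − Σ_{i=1}^{n} x_i y_i, with quadratic form q, and let q_ℂ denote the quadratic form on ℂ^{1+n} extending q ℂ-bilinearly, q_ℂ(v) = v₀² − Σ_{i=1}^{n} v_i². Suppose w ∈ ℝ^{1+n} satisfies q(w) > 0 (w is time-like). Then for every ϖ ∈ ℝ^{1+n} and every z ∈ ℂ with Im z ≠ 0 one has q_ℂ(ϖ + z·w) ≠ 0. -/

import Mathlib

/-- **Semiclassical ellipticity off the real axis** (Subsection 3.2 of the paper).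
If `w ∈ ℝ^{1+n}` is time-like for the Minkowski quadratic form, then for every real
covector `ϖ` and every `z ∈ ℂ` with `Im z ≠ 0`, the complexified Minkowski quadratic
form does not vanish on `ϖ + z·w`. -/
theorem minkowski_complex_quadratic_ne_zero (n : ℕ) (hn : 1 ≤ n)
    (w : Fin (n + 1) → ℝ)
    (hw : 0 < w 0 ^ 2 - ∑ i : Fin n, w i.succ ^ 2)
    (ϖ : Fin (n + 1) → ℝ) (z : ℂ) (hz : z.im ≠ 0) :
    ((ϖ 0 : ℂ) + z * (w 0 : ℂ)) ^ 2
      - ∑ i : Fin n, ((ϖ i.succ : ℂ) + z * (w i.succ : ℂ)) ^ 2 ≠ 0 := by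
  intro h
  set b : Fin (n + 1) → ℝ := fun i => ϖ i + z.re * w i with hb
  have key : ∀ i, ((ϖ i : ℂ) + z * (w i : ℂ)) ^ 2
      = ((b i ^ 2 - z.im ^ 2 * w i ^ 2 : ℝ) : ℂ)
        + ((2 * z.im * (b i * w i) : ℝ) : ℂ) * Complex.I := by
    intro i
    apply Complex.ext <;> simp [hb, pow_two] <;> ring
  simp only [key] at h
  have hre := congrArg Complex.re h
  have him := congrArg Complex.im h
  simp only [Complex.sub_re, Complex.sub_im, Complex.re_sum, Complex.im_sum, Complex.add_re,
    Complex.add_im, Complex.ofReal_re, Complex.ofReal_im, Complex.re_ofReal_mul,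
    Complex.im_ofReal_mul, Complex.I_re, Complex.I_im, Complex.zero_re, Complex.zero_im,
    mul_zero, mul_one, add_zero, zero_add] at hre him
  rw [Finset.sum_sub_distrib, ← Finset.mul_sum] at hre
  rw [← Finset.mul_sum] at him
  have hcs := Finset.sum_mul_sq_le_sq_mul_sq Finset.univ
    (fun i : Fin n => b i.succ) (fun i : Fin n => w i.succ)
  have hS : 0 ≤ ∑ i : Fin n, b i.succ ^ 2 := Finset.sum_nonneg fun i _ => sq_nonneg _
  have hW : 0 ≤ ∑ i : Fin n, w i.succ ^ 2 := Finset.sum_nonneg fun i _ => sq_nonneg _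
  have hP : b 0 * w 0 = ∑ i : Fin n, b i.succ * w i.succ := by
    have h2 : 2 * z.im ≠ 0 := mul_ne_zero two_ne_zero hz
    exact mul_left_cancel₀ h2 (by linarith)
  have hy : 0 < z.im ^ 2 := by positivity
  have hpos := mul_pos hy hw
  rw [← hP, mul_pow] at hcs
  have h1 : ∑ i : Fin n, b i.succ ^ 2 < b 0 ^ 2 := by linarith
  have h3 : ∑ i : Fin n, w i.succ ^ 2 < w 0 ^ 2 := by linarith
  exact absurd hcs (not_le.mpr (mul_lt_mul'' h1 h3 hS hW))
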